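/- Let n ≥ 1, let 𝓛 be a fixed real symmetric positive definite n×n matrix, let γ > 0, let S : ℝ → (n×n real matrices) be continuous, and let 𝓛̂ : ℝ → (n×n real matrices) be differentiable with 𝓛̂(t) symmetric positive definite for every t and satisfying the natural adaptation law 𝓛̂'(t) = (1/γ) 𝓛̂(t) S(t) 𝓛̂(t). Then d/dt D_F(𝓛 ‖ 𝓛̂(t)) = (1/γ) tr( S(t) · (𝓛̂(t) − 𝓛) ). -/

import Mathlib

/-!
Jacobi's formula turns the derivative of `log det 𝓛̂` into `tr (𝓛̂⁻¹ 𝓛̂')`, and the derivative of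
`tr (𝓛̂⁻¹ 𝓛)` is `-tr (𝓛̂⁻¹ 𝓛̂' 𝓛̂⁻¹ 𝓛)`. Hence along every differentiable curve of invertible
matrices the divergence changes at rate `tr (𝓛̂⁻¹ 𝓛̂' 𝓛̂⁻¹ (𝓛̂ - 𝓛))`. The natural adaptation law is
exactly the prescription `𝓛̂⁻¹ 𝓛̂' 𝓛̂⁻¹ = (1/γ) S`.
-/

open Matrix

section Algebra

variable {ι R : Type*} [Fintype ι] [DecidableEq ι] [CommRing R]

theorem trace_adjugate_mul (A B : Matrix ι ι R) :
    (A.adjugate * B).trace = ∑ i, (A.updateCol i (B.col i)).det := by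
  refine Finset.sum_congr rfl fun i _ => ?_
  rw [← cramer_apply, cramer_eq_adjugate_mulVec]
  rfl

theorem det_updateCol_eq_sum_prod_erase (A : Matrix ι ι R) (i : ι) (v : ι → R) :
    (A.updateCol i v).det =
      ∑ σ : Equiv.Perm ι, (σ.sign : R) * ((∏ j ∈ Finset.univ.erase i, A (σ j) j) * v (σ i)) := by
  rw [det_apply']
  refine Finset.sum_congr rfl fun σ _ => ?_
  rw [← Finset.prod_erase_mul _ _ (Finset.mem_univ i), updateCol_self]
  congr 2
  exact Finset.prod_congr rfl fun j hj => updateCol_ne (Finset.ne_of_mem_erase hj)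

theorem adjugate_eq_det_smul_inv {A : Matrix ι ι R} (hA : IsUnit A.det) :
    A.adjugate = A.det • A⁻¹ := by
  rw [inv_def, smul_smul, Ring.mul_inverse_cancel _ hA, one_smul]

end Algebra

section MatrixCalculus

variable {𝕜 : Type*} [NontriviallyNormedField 𝕜] {t : 𝕜}

theorem hasDerivAt_matrix_iff {ι κ E : Type*} [Finite ι] [Finite κ] [NormedAddCommGroup E]
    [NormedSpace 𝕜 E] {A : 𝕜 → Matrix ι κ E} {A' : Matrix ι κ E} :
    HasDerivAt A A' t ↔ ∀ i j, HasDerivAt (fun s => A s i j) (A' i j) t := by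
  have := Fintype.ofFinite ι
  have := Fintype.ofFinite κ
  exact hasDerivAt_pi.trans (forall_congr' fun _ => hasDerivAt_pi)

theorem hasDerivAt_matrix_mul_const {ι κ μ 𝔸 : Type*} [Finite ι] [Fintype κ] [Finite μ]
    [NormedRing 𝔸] [NormedAlgebra 𝕜 𝔸] {A : 𝕜 → Matrix ι κ 𝔸} {A' : Matrix ι κ 𝔸}
    (hA : HasDerivAt A A' t) (B : Matrix κ μ 𝔸) :
    HasDerivAt (fun s => A s * B) (A' * B) t :=
  hasDerivAt_matrix_iff.2 fun i j => HasDerivAt.fun_sum fun k _ =>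
    (hasDerivAt_matrix_iff.1 hA i k).mul_const (B k j)

variable {ι : Type*} [Fintype ι]

theorem hasDerivAt_matrix_trace {E : Type*} [NormedAddCommGroup E] [NormedSpace 𝕜 E]
    {A : 𝕜 → Matrix ι ι E} {A' : Matrix ι ι E} (hA : HasDerivAt A A' t) :
    HasDerivAt (fun s => (A s).trace) A'.trace t :=
  HasDerivAt.fun_sum fun i _ => hasDerivAt_matrix_iff.1 hA i i

variable {𝔸 : Type*} [NormedCommRing 𝔸] [NormedAlgebra 𝕜 𝔸] [DecidableEq ι]
  {A : 𝕜 → Matrix ι ι 𝔸} {A' : Matrix ι ι 𝔸}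

theorem hasDerivAt_matrix_det (hA : HasDerivAt A A' t) :
    HasDerivAt (fun s => (A s).det) ((A t).adjugate * A').trace t := by
  have hentry := hasDerivAt_matrix_iff.1 hA
  have hleibniz : HasDerivAt (fun s => (A s).det)
      (∑ σ : Equiv.Perm ι, (σ.sign : 𝔸) *
        ∑ i, (∏ j ∈ Finset.univ.erase i, A t (σ j) j) • A' (σ i) i) t := by
    simp only [det_apply']
    exact HasDerivAt.fun_sum fun σ _ =>
      (HasDerivAt.fun_finsetProd fun i _ => hentry (σ i) i).const_mul _
  refine hleibniz.congr_deriv ?_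
  simp only [trace_adjugate_mul, det_updateCol_eq_sum_prod_erase, Finset.mul_sum, smul_eq_mul,
    col_apply]
  exact Finset.sum_comm

-- Inversion is differentiable in a complete normed ring; this norm induces the entrywise topology.
attribute [local instance] Matrix.linftyOpNormedRing Matrix.linftyOpNormedAlgebra

theorem hasDerivAt_matrix_inv [CompleteSpace 𝔸] (hA : HasDerivAt A A' t) (hu : IsUnit (A t).det) :
    HasDerivAt (fun s => (A s)⁻¹) (-((A t)⁻¹ * A' * (A t)⁻¹)) t := by
  -- The uniformity of the norm has to be named: by default `Matrix` carries the entrywise one.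
  have : @CompleteSpace (Matrix ι ι 𝔸) PseudoMetricSpace.toUniformSpace :=
    inferInstanceAs (CompleteSpace (ι → ι → 𝔸))
  obtain ⟨u, hAu⟩ := (isUnit_iff_isUnit_det _).2 hu
  have hinv := hasFDerivAt_ringInverse (𝕜 := 𝕜) u
  rw [hAu] at hinv
  simpa [Function.comp_def, ← nonsing_inv_eq_ringInverse, coe_units_inv, hAu]
    using! hinv.comp_hasDerivAt t hA

end MatrixCalculus

section LogDet

variable {ι : Type*} [Fintype ι] [DecidableEq ι] {A : ℝ → Matrix ι ι ℝ} {A' : Matrix ι ι ℝ} {t : ℝ}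

theorem hasDerivAt_log_det_div_const (hA : HasDerivAt A A' t) (hdet : (A t).det ≠ 0) {c : ℝ}
    (hc : c ≠ 0) :
    HasDerivAt (fun s => Real.log ((A s).det / c)) ((A t)⁻¹ * A').trace t := by
  refine (((hasDerivAt_matrix_det hA).div_const c).log (div_ne_zero hdet hc)).congr_deriv ?_
  rw [adjugate_eq_det_smul_inv hdet.isUnit, smul_mul, trace_smul, smul_eq_mul]
  field_simp

/-- The log-determinant Bregman divergence `D_F(L ‖ M)`, whose second argument `M` is the estimate
of `L`. It is defined for all real square matrices, but has its usual meaning only where `det M` and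
`det L` have the same sign. -/
noncomputable def logDetBregman (L M : Matrix ι ι ℝ) : ℝ :=
  Real.log (M.det / L.det) + (M⁻¹ * L).trace - Fintype.card ι

theorem hasDerivAt_logDetBregman {L : Matrix ι ι ℝ} (hA : HasDerivAt A A' t)
    (hdet : (A t).det ≠ 0) (hL : L.det ≠ 0) :
    HasDerivAt (fun s => logDetBregman L (A s))
      ((A t)⁻¹ * A' * (A t)⁻¹ * (A t - L)).trace t := by
  have hlog := hasDerivAt_log_det_div_const hA hdet hL
  have htrace := hasDerivAt_matrix_trace <|
    hasDerivAt_matrix_mul_const (hasDerivAt_matrix_inv hA hdet.isUnit) L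
  refine ((hlog.add htrace).sub_const _).congr_deriv ?_
  rw [mul_sub, nonsing_inv_mul_cancel_right _ _ hdet.isUnit, neg_mul, trace_neg, trace_sub,
    sub_eq_add_neg]

theorem bregman_logdet_deriv_natural_adaptation_law_general {L S : Matrix ι ι ℝ} {c : ℝ}
    (hdet : 0 < (A t).det / L.det) (hlaw : HasDerivAt A (c • (A t * S * A t)) t) :
    HasDerivAt (fun s => logDetBregman L (A s)) (c * (S * (A t - L)).trace) t := by
  obtain ⟨hA, hL⟩ := div_ne_zero_iff.1 hdet.ne'
  have hrate : (A t)⁻¹ * (c • (A t * S * A t)) * (A t)⁻¹ = c • S := by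
    rw [Matrix.mul_smul, smul_mul, Matrix.mul_assoc (A t),
      nonsing_inv_mul_cancel_left _ _ hA.isUnit, mul_nonsing_inv_cancel_right _ _ hA.isUnit]
  refine (hasDerivAt_logDetBregman hlaw hA hL).congr_deriv ?_
  rw [hrate, smul_mul, trace_smul, smul_eq_mul]

end LogDet

/-- Let `𝓛` be a fixed real symmetric positive definite `n × n` matrix
(`n ≥ 1`), `γ > 0`, `S : ℝ → Matrix` continuous (entrywise), and `𝓛̂ : ℝ → Matrix`
differentiable with `𝓛̂ t` symmetric positive definite for every `t`, satisfying the natural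
adaptation law `𝓛̂'(t) = (1/γ) 𝓛̂(t) S(t) 𝓛̂(t)`.  Then
`d/dt D_F(𝓛 ‖ 𝓛̂ t) = (1/γ) tr(S(t) (𝓛̂(t) − 𝓛))`. -/
theorem bregman_logdet_deriv_natural_adaptation_law
    (n : ℕ) (hn : 1 ≤ n)
    (L : Matrix (Fin n) (Fin n) ℝ) (hL : L.PosDef)
    (γ : ℝ) (hγ : 0 < γ)
    (S : ℝ → Matrix (Fin n) (Fin n) ℝ)
    (hS : ∀ i j, Continuous fun t => S t i j)
    (Lhat : ℝ → Matrix (Fin n) (Fin n) ℝ)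
    (hpd : ∀ t, (Lhat t).PosDef)
    (hlaw : ∀ t, ∀ i j,
      HasDerivAt (fun s => Lhat s i j) (((1 / γ) • (Lhat t * S t * Lhat t)) i j) t) :
    ∀ t, HasDerivAt
      (fun s => Real.log ((Lhat s).det / L.det) + ((Lhat s)⁻¹ * L).trace - (n : ℝ))
      ((1 / γ) * (S t * (Lhat t - L)).trace) t := fun t => by
  simpa only [logDetBregman, Fintype.card_fin] using
    bregman_logdet_deriv_natural_adaptation_law_general
      (div_pos (hpd t).det_pos hL.det_pos) (hasDerivAt_matrix_iff.2 (hlaw t))
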